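/- Let ν > 0, ξ > 0, t > 0 and x, x' > 0. Then the series Σ_{k=0}^∞ e^{−ξ(4k+2(1+ν))t} Φ_{ξ,k}(x) Φ_{ξ,k}(x') converges and its sum equals (ξ√(xx')/sinh(2ξt)) · I_ν( ξ x x' / sinh(2ξt) ) · exp( −(ξ/2)(x² + x'²) coth(2ξt) ). -/

import Mathlib

open MeasureTheory Real Set

/-- Pochhammer symbol (rising factorial) `(c)_k = c (c+1) ⋯ (c+k−1)`. -/
noncomputable def poch (c : ℝ) (k : ℕ) : ℝ := (ascPochhammer ℝ k).eval c

/-- Kummer's confluent hypergeometric function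
`M(a,b,z) = ∑_{k=0}^∞ ((a)_k / ((b)_k · k!)) z^k`. -/
noncomputable def kummerM (a b z : ℝ) : ℝ :=
  ∑' k : ℕ, poch a k / (poch b k * (Nat.factorial k : ℝ)) * z ^ k

/-- Generalized Laguerre polynomial `L_k^{(ν)}(x) = ((1+ν)_k / k!) · M(−k, 1+ν, x)`. -/
noncomputable def laguerreL (ν : ℝ) (k : ℕ) (x : ℝ) : ℝ :=
  poch (1 + ν) k / (Nat.factorial k : ℝ) * kummerM (-(k : ℝ)) (1 + ν) x

/-- The normalized eigenfunctions
`Φ_{ξ,k}(x) = √(2ξ^{1+ν}/Γ(1+ν)) √(k!/(1+ν)_k) e^{−ξx²/2} x^{1/2+ν} L_k^{(ν)}(ξx²)`. -/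
noncomputable def PhiFun (ν ξ : ℝ) (k : ℕ) (x : ℝ) : ℝ :=
  Real.sqrt (2 * ξ ^ (1 + ν) / Real.Gamma (1 + ν)) *
    Real.sqrt ((Nat.factorial k : ℝ) / poch (1 + ν) k) *
    Real.exp (-ξ * x ^ 2 / 2) * x ^ ((1 : ℝ) / 2 + ν) * laguerreL ν k (ξ * x ^ 2)

/-- Modified Bessel function `I_ν(z) = ∑_{m=0}^∞ (z/2)^{2m+ν} / (m! Γ(m+ν+1))`. -/
noncomputable def besselI (ν z : ℝ) : ℝ :=
  ∑' m : ℕ, (z / 2) ^ (2 * (m : ℝ) + ν) / ((Nat.factorial m : ℝ) * Real.Gamma ((m : ℝ) + ν + 1))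


lemma poch_zero (c : ℝ) : poch c 0 = 1 := by simp [poch]

lemma poch_succ (c : ℝ) (n : ℕ) : poch c (n + 1) = poch c n * (c + n) := by
  simp [poch, ascPochhammer_succ_eval]

lemma poch_pos {c : ℝ} (hc : 0 < c) (n : ℕ) : 0 < poch c n := ascPochhammer_pos n c hc

lemma poch_add (c : ℝ) (m n : ℕ) : poch c (m + n) = poch c m * poch (c + m) n := by
  induction n with
  | zero => simp [poch_zero]
  | succ n ih => rw [← add_assoc, poch_succ, ih, poch_succ]; push_cast; ring

lemma fact_le_poch {c : ℝ} (hc : 1 ≤ c) (n : ℕ) : (n.factorial : ℝ) ≤ poch c n := by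
  induction n with
  | zero => simp [poch_zero]
  | succ n ih =>
    rw [poch_succ, Nat.factorial_succ, mul_comm]; push_cast
    have : (0:ℝ) ≤ n := Nat.cast_nonneg n
    apply mul_le_mul ih (by linarith) (by linarith) (poch_pos (by linarith) n).le

lemma poch_neg (k i : ℕ) : poch (-(k : ℝ)) i = (-1) ^ i * (i.factorial : ℝ) * (k.choose i : ℝ) := by
  induction i with
  | zero => simp [poch_zero]
  | succ i ih =>
    rw [poch_succ, ih, Nat.factorial_succ]
    have h : ((k.choose (i + 1) : ℕ) : ℝ) * (i + 1) = k.choose i * (k - i) := by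
      rcases le_or_gt i k with h | h
      · have := Nat.choose_succ_right_eq k i
        have h2 : ((k - i : ℕ) : ℝ) = k - i := by push_cast [h]; ring
        rw [← h2]; exact_mod_cast this
      · rw [Nat.choose_eq_zero_of_lt h, Nat.choose_eq_zero_of_lt (by omega)]; simp
    push_cast
    rw [pow_succ]
    linear_combination (-1) ^ i * (i.factorial : ℝ) * h

lemma hasSum_binom (b r : ℝ) (h0 : 0 ≤ r) (h1 : r < 1) :
    HasSum (fun n : ℕ => poch b n / (n.factorial : ℝ) * r ^ n) ((1 - r) ^ (-b)) := by
  have h := (Real.one_div_one_sub_rpow_hasFPowerSeriesOnBall_zero b).hasSum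
    (y := r) (by simp [enorm_eq_nnnorm]; rw [← NNReal.coe_lt_coe]; simpa [abs_of_nonneg h0] using h1)
  simp only [zero_add] at h
  rw [Real.rpow_neg (by linarith), ← one_div]
  convert! h using 2 with n
  rw [FormalMultilinearSeries.ofScalars_apply_eq]
  have := Ring.factorial_nsmul_multichoose_eq_ascPochhammer b n
  rw [Polynomial.ascPochhammer_smeval_eq_eval, nsmul_eq_mul] at this
  rw [← Ring.multichoose_eq, smul_eq_mul, poch, ← this]
  field_simp

lemma hasSum_binom_choose (b r : ℝ) (h0 : 0 ≤ r) (h1 : r < 1) (p : ℕ) :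
    HasSum (fun k : ℕ => r ^ k * (poch b k / (k.factorial : ℝ)) * (k.choose p : ℝ))
      ((1 - r) ^ (-b) * ((r / (1 - r)) ^ p * (poch b p / (p.factorial : ℝ)))) := by
  have hinj : Function.Injective (fun n : ℕ => n + p) := add_left_injective p
  rw [← hinj.hasSum_iff]
  · have h := (hasSum_binom (b + p) r h0 h1).mul_left (r ^ p * (poch b p / (p.factorial : ℝ)))
    convert! h using 1
    · ext n
      have hc : (((n + p).choose p : ℕ) : ℝ) = ((n + p).factorial : ℝ) / (n.factorial * p.factorial) := by
        rw [Nat.cast_choose ℝ (by omega)]; simp [mul_comm]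
      simp only [Function.comp]
      rw [hc, add_comm n p, poch_add]
      field_simp
      ring
    · have : (0:ℝ) < 1 - r := by linarith
      rw [neg_add, Real.rpow_add this, Real.rpow_neg this.le (p : ℝ), Real.rpow_natCast, div_pow]
      field_simp
  · intro k hk
    have : k < p := by
      by_contra hcon
      exact hk ⟨k - p, by simp; omega⟩
    simp [Nat.choose_eq_zero_of_lt this]

lemma hasSum_S (a r : ℝ) (h0 : 0 ≤ r) (h1 : r < 1) (i j : ℕ) :
    HasSum (fun k : ℕ => r ^ k * (poch a k / (k.factorial : ℝ)) * (k.choose i : ℝ) * (k.choose j : ℝ))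
      ((1 - r) ^ (-a) * ((r / (1 - r)) ^ i * (poch a i / (i.factorial : ℝ))) *
        ∑ w ∈ Finset.HasAntidiagonal.antidiagonal j, (i.choose w.1 : ℝ) *
          ((r / (1 - r)) ^ w.2 * (poch (a + i) w.2 / (w.2.factorial : ℝ)))) := by
  have hinj : Function.Injective (fun n : ℕ => n + i) := add_left_injective i
  rw [← hinj.hasSum_iff]
  · have h := (hasSum_sum (s := Finset.HasAntidiagonal.antidiagonal j) (fun w _ =>
      (hasSum_binom_choose (a + i) r h0 h1 w.2).mul_left (i.choose w.1 : ℝ))).mul_left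
        (r ^ i * (poch a i / (i.factorial : ℝ)))
    convert! h using 1
    · ext n
      have hc : (((n + i).choose i : ℕ) : ℝ) = ((n + i).factorial : ℝ) / (n.factorial * i.factorial) := by
        rw [Nat.cast_choose ℝ (by omega)]; simp [mul_comm]
      have hv : (((n + i).choose j : ℕ) : ℝ) = ∑ w ∈ Finset.HasAntidiagonal.antidiagonal j, (i.choose w.1 : ℝ) * (n.choose w.2 : ℝ) := by
        rw [add_comm, Nat.add_choose_eq]; push_cast; rfl
      simp only [Function.comp]
      rw [hc, hv, add_comm n i, poch_add, Finset.mul_sum, Finset.mul_sum]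
      refine Finset.sum_congr rfl fun w _ => ?_
      field_simp
      ring
    · have : (0:ℝ) < 1 - r := by linarith
      rw [neg_add, Real.rpow_add this, Real.rpow_neg this.le (i : ℝ), Real.rpow_natCast, div_pow,
        Finset.mul_sum, Finset.mul_sum]
      refine Finset.sum_congr rfl fun w _ => ?_
      field_simp
  · intro k hk
    have : k < i := by
      by_contra hcon
      exact hk ⟨k - i, by simp; omega⟩
    simp [Nat.choose_eq_zero_of_lt this]

/-- Formal series of `(1 - s z)^{-a}`. -/
noncomputable def fser (s a : ℝ) : PowerSeries ℝ :=
  PowerSeries.mk fun n => s ^ n * (poch a n / (n.factorial : ℝ))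

lemma poch_shift (a : ℝ) (n : ℕ) : a * poch (a + 1) n = poch a n * (a + n) := by
  have := poch_add a 1 n
  rw [add_comm 1 n, poch_succ, poch_succ, poch_zero] at this
  simpa using this.symm

lemma fser_step (s a : ℝ) :
    fser s (a + 1) * (1 - PowerSeries.C s * PowerSeries.X) = fser s a := by
  ext n
  rw [mul_sub, mul_one, map_sub, ← mul_assoc]
  cases n with
  | zero => simp [fser, poch_zero]
  | succ n =>
    rw [PowerSeries.coeff_succ_mul_X, mul_comm (fser s (a + 1)), PowerSeries.coeff_C_mul]
    simp only [fser, PowerSeries.coeff_mk]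
    rw [poch_succ, poch_succ, Nat.factorial_succ]
    have h := poch_shift a n
    push_cast
    field_simp
    linear_combination s ^ (n+1) * h

lemma fser_pow (s a : ℝ) (d : ℕ) :
    fser s (a + d) * (1 - PowerSeries.C s * PowerSeries.X) ^ d = fser s a := by
  induction d with
  | zero => simp
  | succ d ih =>
    push_cast
    rw [← add_assoc, pow_succ', ← mul_assoc, fser_step, ih]

lemma fin_identity (s a : ℝ) (i j : ℕ) :
    ∑ w ∈ Finset.HasAntidiagonal.antidiagonal j, (i.choose w.1 : ℝ) *
          (s ^ w.2 * (poch (a + i) w.2 / (w.2.factorial : ℝ))) =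
    ∑ m ∈ Finset.range (i + 1), (i.choose m : ℝ) * (1 + s) ^ m *
      (if m ≤ j then s ^ (j - m) * (poch (a + m) (j - m) / ((j - m).factorial : ℝ)) else 0) := by
  have key : (1 + PowerSeries.X : PowerSeries ℝ) ^ i * fser s (a + i) =
      ∑ m ∈ Finset.range (i + 1), PowerSeries.C ((i.choose m : ℝ) * (1 + s) ^ m) *
        (fser s (a + m) * PowerSeries.X ^ m) := by
    have e : (1 + PowerSeries.X : PowerSeries ℝ) =
      PowerSeries.C (1 + s) * PowerSeries.X + (1 - PowerSeries.C s * PowerSeries.X) := by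
      rw [map_add, map_one]; ring
    rw [e, add_pow, Finset.sum_mul]
    refine Finset.sum_congr rfl fun m hm => ?_
    have hm' : m ≤ i := by simpa [Nat.lt_succ_iff] using hm
    have h2 := fser_pow s (a + m) (i - m)
    rw [show a + (m:ℝ) + ((i - m : ℕ) : ℝ) = a + i by push_cast [hm']; ring] at h2
    rw [← h2, map_mul, map_pow, mul_pow, map_natCast]
    ring
  have h := congrArg (PowerSeries.coeff j) key
  rw [PowerSeries.coeff_mul, map_sum] at h
  convert! h using 1
  · refine Finset.sum_congr rfl fun w _ => ?_
    congr 1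
    · have : (1 + PowerSeries.X : PowerSeries ℝ) ^ i = (((1 + Polynomial.X) ^ i : Polynomial ℝ) : PowerSeries ℝ) := by
        simp
      rw [this, Polynomial.coeff_coe, Polynomial.coeff_one_add_X_pow]
    · simp [fser]
  · refine Finset.sum_congr rfl fun m _ => ?_
    rw [PowerSeries.coeff_C_mul, PowerSeries.coeff_mul_X_pow']
    simp [fser]

lemma hasSum_kummer (k : ℕ) (a X : ℝ) :
    HasSum (fun i : ℕ => (k.choose i : ℝ) * ((-X) ^ i / poch a i)) (kummerM (-(k : ℝ)) a X) := by
  have e : (fun i : ℕ => (k.choose i : ℝ) * ((-X) ^ i / poch a i)) =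
      fun i : ℕ => poch (-(k : ℝ)) i / (poch a i * (Nat.factorial i : ℝ)) * X ^ i := by
    ext i
    have : (i.factorial : ℝ) ≠ 0 := by positivity
    rw [poch_neg, neg_pow X]
    rcases eq_or_ne (poch a i) 0 with h | h
    · simp [h]
    · field_simp
  have hs : Summable (fun i : ℕ => (k.choose i : ℝ) * ((-X) ^ i / poch a i)) := by
    apply summable_of_ne_finset_zero (s := Finset.range (k + 1))
    intro i hi
    rw [Nat.choose_eq_zero_of_lt (by simpa using hi)]; simp
  have := hs.hasSum
  unfold kummerM
  rwa [← e]

lemma choose_bound (k i : ℕ) (e : ℝ) (he : 0 < e) :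
    (k.choose i : ℝ) ≤ (1 + e) ^ k * (1 / e) ^ i := by
  rcases le_or_gt i k with h | h
  · have h1 : e ^ i * (k.choose i : ℝ) ≤ (1 + e) ^ k := by
      rw [add_comm, add_pow]
      have := Finset.single_le_sum (f := fun m => e ^ m * 1 ^ (k - m) * (k.choose m : ℝ))
        (s := Finset.range (k + 1)) (fun m _ => by positivity) (Finset.mem_range.2 (Nat.lt_succ_of_le h))
      simpa using this
    rw [one_div, inv_pow, ← div_eq_mul_inv, le_div_iff₀ (by positivity)]
    linarith
  · rw [Nat.choose_eq_zero_of_lt h]; simp; positivity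

lemma T_summable (a r X Y : ℝ) (ha : 1 ≤ a) (h0 : 0 ≤ r) (h1 : r < 1) :
    Summable (fun p : ℕ × ℕ × ℕ => (r ^ p.1 * (poch a p.1 / (p.1.factorial : ℝ))) *
      (((p.1.choose p.2.1 : ℝ) * ((-X) ^ p.2.1 / poch a p.2.1)) *
        ((p.1.choose p.2.2 : ℝ) * ((-Y) ^ p.2.2 / poch a p.2.2)))) := by
  set e : ℝ := (1 - r) / 2 with he
  have hepos : 0 < e := by rw [he]; linarith
  have hlt : r * (1 + e) ^ 2 < 1 := by
    have : 1 - r * (1 + e) ^ 2 = e ^ 2 * (3 + 2 * e) := by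
      have : r = 1 - 2 * e := by rw [he]; ring
      rw [this]; ring
    have : 0 < e ^ 2 * (3 + 2 * e) := by positivity
    linarith
  clear_value e
  have s1 := (hasSum_binom a (r * (1 + e) ^ 2) (by positivity) hlt).summable
  have s2 := Real.summable_pow_div_factorial (|X| / e)
  have s3 := Real.summable_pow_div_factorial (|Y| / e)
  have hp : ∀ n, 0 < poch a n := poch_pos (by linarith)
  have s23 := s2.mul_of_nonneg s3 (fun n => by positivity) (fun n => by positivity)
  have s := s1.mul_of_nonneg s23 (fun n => by have := hp n; positivity)
    (fun n => by simp only [Pi.zero_apply]; positivity)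
  have hb : ∀ (Z : ℝ) (k i : ℕ), |(k.choose i : ℝ) * ((-Z) ^ i / poch a i)| ≤
      (1 + e) ^ k * ((|Z| / e) ^ i / (i.factorial : ℝ)) := by
    intro Z k i
    rw [abs_mul, abs_div, abs_pow, abs_neg, abs_of_pos (hp i), Nat.abs_cast]
    calc (k.choose i : ℝ) * (|Z| ^ i / poch a i)
        ≤ ((1 + e) ^ k * (1 / e) ^ i) * (|Z| ^ i / (i.factorial : ℝ)) := by
          apply mul_le_mul (choose_bound k i e hepos) _ (by have := hp i; positivity) (by positivity)
          exact div_le_div_of_nonneg_left (by positivity) (by positivity) (fact_le_poch ha i)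
      _ = _ := by rw [div_pow, div_pow]; ring
  refine Summable.of_norm_bounded s ?_
  rintro ⟨k, i, j⟩
  simp only
  rw [Real.norm_eq_abs, abs_mul, abs_mul (_ * _) (_ * _), abs_of_nonneg (by have := hp k; positivity)]
  calc _ ≤ (r ^ k * (poch a k / (k.factorial : ℝ))) *
        (((1 + e) ^ k * ((|X| / e) ^ i / (i.factorial : ℝ))) *
          ((1 + e) ^ k * ((|Y| / e) ^ j / (j.factorial : ℝ)))) := by
        apply mul_le_mul_of_nonneg_left _ (by have := hp k; positivity)
        exact mul_le_mul (hb X k i) (hb Y k j) (abs_nonneg _) (by positivity)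
    _ = _ := by rw [mul_pow, ← pow_mul (1 + e)]; ring

/-- The rearranged right-hand side of the Hille-Hardy formula. -/
lemma rhs_hasSum (a r X Y : ℝ) (ha : 1 ≤ a) :
    HasSum (fun p : (ℕ × ℕ) × ℕ => if p.2 ≤ p.1.1 ∧ p.2 ≤ p.1.2 then
        (X * Y * ((r / (1 - r)) * (1 + r / (1 - r)))) ^ p.2 / ((p.2.factorial : ℝ) * poch a p.2) *
        ((-X * (r / (1 - r))) ^ (p.1.1 - p.2) / ((p.1.1 - p.2).factorial : ℝ) *
        ((-Y * (r / (1 - r))) ^ (p.1.2 - p.2) / ((p.1.2 - p.2).factorial : ℝ))) else 0)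
      ((∑' m : ℕ, (X * Y * ((r / (1 - r)) * (1 + r / (1 - r)))) ^ m /
          ((m.factorial : ℝ) * poch a m)) *
        (Real.exp (-X * (r / (1 - r))) * Real.exp (-Y * (r / (1 - r))))) := by
  have hp : ∀ n, 0 < poch a n := poch_pos (by linarith)
  set W := X * Y * ((r / (1 - r)) * (1 + r / (1 - r)))
  have hexp : ∀ z : ℝ, HasSum (fun n : ℕ => z ^ n / (n.factorial : ℝ)) (Real.exp z) := fun z => by
    rw [Real.exp_eq_exp_ℝ]; exact NormedSpace.expSeries_div_hasSum_exp z
  have hn : ∀ z : ℝ, Summable (fun n : ℕ => ‖z ^ n / (n.factorial : ℝ)‖) := fun z =>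
    (Real.summable_pow_div_factorial z).norm
  have h1 : Summable (fun m : ℕ => ‖W ^ m / ((m.factorial : ℝ) * poch a m)‖) := by
    refine Summable.of_nonneg_of_le (fun m => norm_nonneg _) (fun m => ?_) (hn W)
    rw [norm_div, norm_div, norm_mul]
    have : (1:ℝ) ≤ ‖poch a m‖ := by
      rw [Real.norm_eq_abs, abs_of_pos (hp m)]
      refine le_trans ?_ (fact_le_poch ha m)
      exact_mod_cast Nat.factorial_pos m
    have hf : (0:ℝ) < ‖(m.factorial : ℝ)‖ := by
      rw [norm_pos_iff]; positivity
    apply div_le_div_of_nonneg_left (norm_nonneg _) hf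
    nlinarith
  have h2 := summable_mul_of_summable_norm (hn (-X * (r / (1 - r)))) (hn (-Y * (r / (1 - r))))
  have h2' := (hexp (-X * (r / (1 - r)))).mul (hexp (-Y * (r / (1 - r)))) h2
  have h3 := h1.of_norm.hasSum.mul h2' (summable_mul_of_summable_norm h1 h2.norm)
  let g : ℕ × ℕ × ℕ → (ℕ × ℕ) × ℕ := fun q => ((q.1 + q.2.1, q.1 + q.2.2), q.1)
  have hg : Function.Injective g := by
    rintro ⟨m, u, v⟩ ⟨m', u', v'⟩ h
    simp only [g, Prod.mk.injEq] at h ⊢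
    omega
  rw [← hg.hasSum_iff]
  · convert! h3 using 1
    ext ⟨m, u, v⟩
    simp [g]
  · rintro ⟨⟨i, j⟩, m⟩ hq
    rw [if_neg]
    rintro ⟨hi, hj⟩
    simp only at hi hj
    exact hq ⟨(m, i - m, j - m), by simp [g]; omega⟩

lemma S_alg (R sm su sv p1 p2 pm F fm fu fv t Xm Xu Ym Yv : ℝ)
    (h1 : p1 ≠ 0) (h2 : p2 ≠ 0) (h3 : F ≠ 0) :
    R * (sm * su * (p1 / F)) * (F / (fm * fu) * t * (sv * (p2 / pm / fv))) *
      (Xm * Xu / p1 * (Ym * Yv / p2)) =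
    R * (Xm * Ym * sm * t / (fm * pm) * (Xu * su / fu * (Yv * sv / fv))) := by
  calc _ = (R * (Xm * Ym * sm * t / (fm * pm) * (Xu * su / fu * (Yv * sv / fv)))) *
        ((p1 * p1⁻¹) * (p2 * p2⁻¹) * (F * F⁻¹)) := by ring
    _ = _ := by
      rw [mul_inv_cancel₀ h1, mul_inv_cancel₀ h2, mul_inv_cancel₀ h3, mul_one, mul_one, mul_one]

lemma S_eq (a r X Y : ℝ) (ha : 1 ≤ a) (i j : ℕ) :
    HasSum (fun m : ℕ => (1 - r) ^ (-a) * if m ≤ i ∧ m ≤ j then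
        (X * Y * ((r / (1 - r)) * (1 + r / (1 - r)))) ^ m / ((m.factorial : ℝ) * poch a m) *
        ((-X * (r / (1 - r))) ^ (i - m) / ((i - m).factorial : ℝ) *
        ((-Y * (r / (1 - r))) ^ (j - m) / ((j - m).factorial : ℝ))) else 0)
      (((1 - r) ^ (-a) * ((r / (1 - r)) ^ i * (poch a i / (i.factorial : ℝ))) *
        ∑ w ∈ Finset.HasAntidiagonal.antidiagonal j, (i.choose w.1 : ℝ) *
          ((r / (1 - r)) ^ w.2 * (poch (a + i) w.2 / (w.2.factorial : ℝ)))) *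
        ((-X) ^ i / poch a i * ((-Y) ^ j / poch a j))) := by
  have hp : ∀ n, 0 < poch a n := poch_pos (by linarith)
  rw [fin_identity]
  set s := r / (1 - r)
  rw [Finset.mul_sum, Finset.sum_mul]
  have := hasSum_sum_of_ne_finset_zero (L := SummationFilter.unconditional ℕ) (s := Finset.range (i + 1))
    (f := fun m : ℕ => (1 - r) ^ (-a) * if m ≤ i ∧ m ≤ j then
        (X * Y * (s * (1 + s))) ^ m / ((m.factorial : ℝ) * poch a m) *
        ((-X * s) ^ (i - m) / ((i - m).factorial : ℝ) *
        ((-Y * s) ^ (j - m) / ((j - m).factorial : ℝ))) else 0) (by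
      intro m hm
      rw [if_neg (by simp at hm; omega)]; simp)
  convert! this using 1
  refine Finset.sum_congr rfl fun m hm => ?_
  have hmi : m ≤ i := by simpa [Nat.lt_succ_iff] using hm
  by_cases hmj : m ≤ j
  · obtain ⟨u, rfl⟩ := Nat.exists_eq_add_of_le hmi
    obtain ⟨v, rfl⟩ := Nat.exists_eq_add_of_le hmj
    rw [if_pos hmj, if_pos ⟨hmi, hmj⟩, Nat.cast_choose ℝ hmi]
    simp only [Nat.add_sub_cancel_left]
    have e1 : poch (a + m) v = poch a (m + v) / poch a m := by
      rw [poch_add]; field_simp [(hp m).ne']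
    rw [e1]
    have this' := (hp (m + u)).ne'
    have this'' := (hp (m + v)).ne'
    have e2 : (X * Y * (s * (1 + s))) ^ m = (-X) ^ m * (-Y) ^ m * s ^ m * (1 + s) ^ m := by
      rw [← mul_pow, ← mul_pow, ← mul_pow]; ring
    rw [e2, mul_pow (-X) s u, mul_pow (-Y) s v, pow_add, pow_add, pow_add]
    exact S_alg _ _ _ _ _ _ _ _ _ _ _ _ _ _ _ _ this' this'' (by positivity)
  · rw [if_neg hmj, if_neg (by tauto)]; simp

lemma hille_hardy (a r X Y : ℝ) (ha : 1 ≤ a) (h0 : 0 ≤ r) (h1 : r < 1) :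
    HasSum (fun k : ℕ => (r ^ k * (poch a k / (k.factorial : ℝ))) *
        (kummerM (-(k : ℝ)) a X * kummerM (-(k : ℝ)) a Y))
      ((1 - r) ^ (-a) * ((∑' m : ℕ, (X * Y * ((r / (1 - r)) * (1 + r / (1 - r)))) ^ m /
          ((m.factorial : ℝ) * poch a m)) *
        (Real.exp (-X * (r / (1 - r))) * Real.exp (-Y * (r / (1 - r)))))) := by
  have hT := T_summable a r X Y ha h0 h1
  have hL := hT.hasSum.prod_fiberwise (fun k => by
    have hs := hT.prod_factor k
    have hA := hasSum_kummer k a X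
    have hB := hasSum_kummer k a Y
    exact (hA.mul hB (summable_mul_of_summable_norm hA.summable.norm hB.summable.norm)).mul_left
      (r ^ k * (poch a k / (k.factorial : ℝ))))
  have hsw := (Equiv.prodComm (ℕ × ℕ) ℕ).hasSum_iff.mpr hT.hasSum
  have hR := hsw.prod_fiberwise (fun q => by
    have := (hasSum_S a r h0 h1 q.1 q.2).mul_right ((-X) ^ q.1 / poch a q.1 * ((-Y) ^ q.2 / poch a q.2))
    convert! this using 1
    ext k
    simp only [Function.comp, Equiv.prodComm_apply, Prod.swap]
    ring)
  have hM := ((rhs_hasSum a r X Y ha).mul_left ((1 - r) ^ (-a))).prod_fiberwise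
    (fun q => S_eq a r X Y ha q.1 q.2)
  rw [← hR.unique hM]
  exact hL

lemma Gamma_poch (a : ℝ) (ha : 0 < a) (m : ℕ) : Real.Gamma (a + m) = Real.Gamma a * poch a m := by
  induction m with
  | zero => simp [poch_zero]
  | succ m ih =>
    push_cast
    rw [← add_assoc, Real.Gamma_add_one (by positivity), ih, poch_succ]; ring

lemma besselI_eq (ν z : ℝ) (hν : 0 < ν) (hz : 0 < z) :
    besselI ν z = (z / 2) ^ ν / Real.Gamma (1 + ν) *
      ∑' m : ℕ, ((z / 2) ^ 2) ^ m / ((m.factorial : ℝ) * poch (1 + ν) m) := by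
  unfold besselI
  rw [← tsum_mul_left]
  congr 1
  ext m
  have hG : Real.Gamma (1 + ν) ≠ 0 := (Real.Gamma_pos_of_pos (by linarith)).ne'
  have hp := (poch_pos (show 0 < 1 + ν by linarith) m).ne'
  rw [show (m : ℝ) + ν + 1 = 1 + ν + m by ring, Gamma_poch _ (by linarith),
    Real.rpow_add (by positivity), ← pow_mul, ← Real.rpow_natCast]
  push_cast
  field_simp

lemma phi_term (ν ξ t x x' : ℝ) (hν : 0 < ν) (hξ : 0 < ξ) (hx : 0 < x) (hx' : 0 < x') (k : ℕ) :
    Real.exp (-(ξ * (4 * (k : ℝ) + 2 * (1 + ν)) * t)) * PhiFun ν ξ k x * PhiFun ν ξ k x' =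
    (2 * ξ ^ (1 + ν) / Real.Gamma (1 + ν) * Real.exp (-(2 * ξ * t)) ^ (1 + ν) *
      Real.exp (-ξ * (x ^ 2 + x' ^ 2) / 2) * (x * x') ^ ((1 : ℝ) / 2 + ν)) *
    ((Real.exp (-(2 * ξ * t)) ^ 2) ^ k * (poch (1 + ν) k / (k.factorial : ℝ)) *
        (kummerM (-(k : ℝ)) (1 + ν) (ξ * x ^ 2) * kummerM (-(k : ℝ)) (1 + ν) (ξ * x' ^ 2))) := by
  have hG : 0 < Real.Gamma (1 + ν) := Real.Gamma_pos_of_pos (by linarith)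
  have hp := poch_pos (show 0 < 1 + ν by linarith) k
  have e1 : Real.exp (-(ξ * (4 * (k : ℝ) + 2 * (1 + ν)) * t)) =
      Real.exp (-(2 * ξ * t)) ^ (1 + ν) * (Real.exp (-(2 * ξ * t)) ^ 2) ^ k := by
    rw [← Real.exp_mul, ← pow_mul, ← Real.exp_nat_mul, ← Real.exp_add]
    congr 1; push_cast; ring
  have e2 : Real.exp (-ξ * (x ^ 2 + x' ^ 2) / 2) =
      Real.exp (-ξ * x ^ 2 / 2) * Real.exp (-ξ * x' ^ 2 / 2) := by
    rw [← Real.exp_add]; congr 1; ring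
  rw [e1, e2, Real.mul_rpow hx.le hx'.le]
  unfold PhiFun laguerreL
  have q1 := Real.mul_self_sqrt (show 0 ≤ 2 * ξ ^ (1 + ν) / Real.Gamma (1 + ν) by positivity)
  have q2 := Real.mul_self_sqrt (show 0 ≤ (Nat.factorial k : ℝ) / poch (1 + ν) k by positivity)
  have q3 : (Nat.factorial k : ℝ) / poch (1 + ν) k * (poch (1 + ν) k / (k.factorial : ℝ)) ^ 2 =
      poch (1 + ν) k / (k.factorial : ℝ) := by field_simp
  generalize √(2 * ξ ^ (1 + ν) / Real.Gamma (1 + ν)) = A at *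
  rw [← q1]
  rw [← q2] at q3
  generalize √((Nat.factorial k : ℝ) / poch (1 + ν) k) = B at *
  generalize poch (1 + ν) k / (k.factorial : ℝ) = F at *
  linear_combination (Real.exp (-(2 * ξ * t)) ^ (1 + ν) * (Real.exp (-(2 * ξ * t)) ^ 2) ^ k * A * A *
    Real.exp (-ξ * x ^ 2 / 2) * Real.exp (-ξ * x' ^ 2 / 2) * x ^ ((1 : ℝ) / 2 + ν) *
    x' ^ ((1 : ℝ) / 2 + ν) * kummerM (-(k : ℝ)) (1 + ν) (ξ * x ^ 2) *
    kummerM (-(k : ℝ)) (1 + ν) (ξ * x' ^ 2)) * q3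

lemma final_eq (ν ξ t x x' : ℝ) (hν : 0 < ν) (hξ : 0 < ξ) (ht : 0 < t)
    (hx : 0 < x) (hx' : 0 < x') (r : ℝ) (hr : r = Real.exp (-(2 * ξ * t)) ^ 2) :
    (2 * ξ ^ (1 + ν) / Real.Gamma (1 + ν) * Real.exp (-(2 * ξ * t)) ^ (1 + ν) *
      Real.exp (-ξ * (x ^ 2 + x' ^ 2) / 2) * (x * x') ^ ((1 : ℝ) / 2 + ν)) *
      ((1 - r) ^ (-(1 + ν)) * ((∑' m : ℕ, (ξ * x ^ 2 * (ξ * x' ^ 2) *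
          ((r / (1 - r)) * (1 + r / (1 - r)))) ^ m / ((m.factorial : ℝ) * poch (1 + ν) m)) *
        (Real.exp (-(ξ * x ^ 2) * (r / (1 - r))) * Real.exp (-(ξ * x' ^ 2) * (r / (1 - r)))))) =
    ξ * Real.sqrt (x * x') / Real.sinh (2 * ξ * t) *
          besselI ν (ξ * x * x' / Real.sinh (2 * ξ * t)) *
          Real.exp (-(ξ / 2) * (x ^ 2 + x' ^ 2) *
            (Real.cosh (2 * ξ * t) / Real.sinh (2 * ξ * t))) := by
  have hT : 0 < 2 * ξ * t := by positivity
  have hS : 0 < Real.sinh (2 * ξ * t) := Real.sinh_pos_iff.2 hT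
  rw [besselI_eq ν _ hν (by positivity)]
  have hsd := Real.sinh_eq (2 * ξ * t)
  have hcd := Real.cosh_eq (2 * ξ * t)
  have hE : Real.exp (2 * ξ * t) = (Real.exp (-(2 * ξ * t)))⁻¹ := by rw [Real.exp_neg, inv_inv]
  rw [hE] at hsd hcd
  have hq0 : 0 < Real.exp (-(2 * ξ * t)) := Real.exp_pos _
  have hq1 : Real.exp (-(2 * ξ * t)) < 1 := by rw [Real.exp_lt_one_iff]; linarith
  generalize Real.exp (-(2 * ξ * t)) = q at *
  generalize Real.sinh (2 * ξ * t) = S at *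
  generalize Real.cosh (2 * ξ * t) = C at *
  have h1r : 0 < 1 - r := by rw [hr]; nlinarith
  have hS2 : 1 - r = 2 * S * q := by rw [hsd, hr]; field_simp
  have hC2 : 1 + r = 2 * C * q := by rw [hcd, hr]; field_simp
  have hG : 0 < Real.Gamma (1 + ν) := Real.Gamma_pos_of_pos (by linarith)
  have hW : ξ * x ^ 2 * (ξ * x' ^ 2) * ((r / (1 - r)) * (1 + r / (1 - r))) =
      (ξ * x * x' / S / 2) ^ 2 := by
    have : (r / (1 - r)) * (1 + r / (1 - r)) = r / (1 - r) ^ 2 := by field_simp; try ring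
    rw [this, hS2, hr]; field_simp
  rw [hW]
  generalize (∑' m : ℕ, ((ξ * x * x' / S / 2) ^ 2) ^ m / ((m.factorial : ℝ) * poch (1 + ν) m)) = B
  have hexp : Real.exp (-ξ * (x ^ 2 + x' ^ 2) / 2) *
      (Real.exp (-(ξ * x ^ 2) * (r / (1 - r))) * Real.exp (-(ξ * x' ^ 2) * (r / (1 - r)))) =
      Real.exp (-(ξ / 2) * (x ^ 2 + x' ^ 2) * (C / S)) := by
    rw [← Real.exp_add, ← Real.exp_add]
    congr 1
    have : C / S = 1 + 2 * (r / (1 - r)) := by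
      have h2 : 1 + 2 * (r / (1 - r)) = (1 + r) / (1 - r) := by field_simp; try ring
      rw [h2, hC2, hS2]; field_simp
    rw [this]; ring
  rw [← hexp]
  have hpow : 2 * ξ ^ (1 + ν) * q ^ (1 + ν) * (x * x') ^ ((1 : ℝ) / 2 + ν) * (1 - r) ^ (-(1 + ν)) =
      ξ * Real.sqrt (x * x') / S * (ξ * x * x' / S / 2) ^ ν := by
    have h3 : ξ * x * x' / S / 2 = ξ * (x * x') / (2 * S) := by field_simp
    have hxx : 0 < x * x' := by positivity
    rw [h3, hS2, Real.rpow_neg (by positivity), Real.mul_rpow (x := 2 * S) (by positivity) (by positivity),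
      Real.rpow_add hxx, ← Real.sqrt_eq_rpow, Real.div_rpow (by positivity) (by positivity),
      Real.mul_rpow (x := ξ) (by positivity) (by positivity), Real.rpow_add (x := 2 * S) (by positivity),
      Real.rpow_add hξ, Real.rpow_one, Real.rpow_one]
    have : q ^ (1 + ν) ≠ 0 := by positivity
    have : (2 * S) ^ ν ≠ 0 := by positivity
    field_simp
  have : ∀ e1 e2 e3 : ℝ, 2 * ξ ^ (1 + ν) / Real.Gamma (1 + ν) * q ^ (1 + ν) * e1 * (x * x') ^ ((1 : ℝ) / 2 + ν) *
      ((1 - r) ^ (-(1 + ν)) * (B * (e2 * e3))) = (2 * ξ ^ (1 + ν) * q ^ (1 + ν) * (x * x') ^ ((1 : ℝ) / 2 + ν) * (1 - r) ^ (-(1 + ν))) / Real.Gamma (1 + ν) * B * (e1 * (e2 * e3)) := by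
    intros; ring
  rw [this, hpow]
  ring

/-- Mehler-type formula: for `ν, ξ, t, x, x' > 0` the heat-kernel series
`∑_k e^{−ξ(4k+2(1+ν))t} Φ_{ξ,k}(x)Φ_{ξ,k}(x')` converges, with sum
`(ξ√(xx')/sinh(2ξt)) I_ν(ξxx'/sinh(2ξt)) exp(−(ξ/2)(x²+x'²) coth(2ξt))`. -/
theorem heat_kernel_formula (ν ξ t x x' : ℝ) (hν : 0 < ν) (hξ : 0 < ξ) (ht : 0 < t)
    (hx : 0 < x) (hx' : 0 < x') :
    Summable (fun k : ℕ =>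
      Real.exp (-(ξ * (4 * (k : ℝ) + 2 * (1 + ν)) * t)) * PhiFun ν ξ k x * PhiFun ν ξ k x') ∧
    ∑' k : ℕ,
        Real.exp (-(ξ * (4 * (k : ℝ) + 2 * (1 + ν)) * t)) * PhiFun ν ξ k x * PhiFun ν ξ k x'
      = ξ * Real.sqrt (x * x') / Real.sinh (2 * ξ * t) *
          besselI ν (ξ * x * x' / Real.sinh (2 * ξ * t)) *
          Real.exp (-(ξ / 2) * (x ^ 2 + x' ^ 2) *
            (Real.cosh (2 * ξ * t) / Real.sinh (2 * ξ * t))) := by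

  have hT : 0 < 2 * ξ * t := by positivity
  have hq0 : 0 < Real.exp (-(2 * ξ * t)) := Real.exp_pos _
  have hq1 : Real.exp (-(2 * ξ * t)) < 1 := by rw [Real.exp_lt_one_iff]; linarith
  have h := (hille_hardy (1 + ν) (Real.exp (-(2 * ξ * t)) ^ 2) (ξ * x ^ 2) (ξ * x' ^ 2)
    (by linarith) (by positivity) (by nlinarith)).mul_left
    (2 * ξ ^ (1 + ν) / Real.Gamma (1 + ν) * Real.exp (-(2 * ξ * t)) ^ (1 + ν) *
      Real.exp (-ξ * (x ^ 2 + x' ^ 2) / 2) * (x * x') ^ ((1 : ℝ) / 2 + ν))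
  rw [final_eq ν ξ t x x' hν hξ ht hx hx' _ rfl] at h
  simp only [← phi_term ν ξ t x x' hν hξ hx hx'] at h
  exact ⟨h.summable, h.tsum_eq⟩
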